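/- For every integer q ≥ 3 there exist a constant c > 0 and an integer n₀ such that for all n ≥ n₀ there exists a spanoid S on [n] with the following properties: for every i ∈ [n] there is a family M_i of ⌊n/(2q)⌋ pairwise disjoint q-element subsets of [n] such that (A,i) is a rule of S for every A ∈ M_i (so S is a q-LCS with error-tolerance 1/(4q)), and rank(S) > c · n^{(q-2)/(q-1)} / log₂ n. -/

import Mathlib

open scoped BigOperators

/-- A spanoid on ground set `X`: a set of inference rules `(A, i)`,
read as "`A` spans `i`". -/
abbrev SpanoidOn (X : Type) : Type := Set (Set X × X)

/-- The span of `T`: the smallest superset `T'` of `T` such that whenever `(A, i)` is a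
rule with `A ⊆ T'`, also `i ∈ T'`. -/
def sSpan {X : Type} (S : SpanoidOn X) (T : Set X) : Set X :=
  ⋂₀ {T' : Set X | T ⊆ T' ∧ ∀ p ∈ S, p.1 ⊆ T' → p.2 ∈ T'}

/-- The rank of a spanoid: the minimum size of a subset spanning the whole ground set. -/
noncomputable def sRank {X : Type} [Fintype X] (S : SpanoidOn X) : ℕ :=
  sInf {k : ℕ | ∃ T : Set X, T.ncard = k ∧ sSpan S T = Set.univ}

/-- A set is closed if it equals its own span. -/
def sClosed {X : Type} (S : SpanoidOn X) (B : Set X) : Prop := sSpan S B = B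

/-- A set is open if its complement is closed. -/
def sOpen {X : Type} (S : SpanoidOn X) (B : Set X) : Prop := sClosed S Bᶜ

/-- A code `C ⊆ K^X` is consistent with the spanoid `S` if for every rule `(A, i)` of `S`
there is a function `g` with `c i = g (c|_A)` for all codewords `c ∈ C`. -/
def sConsistent {X K : Type} (S : SpanoidOn X) (C : Set (X → K)) : Prop :=
  ∀ p ∈ S, ∃ g : (↥p.1 → K) → K, ∀ c ∈ C, c p.2 = g (fun a => c a.1)

/-- The functional rank of a spanoid: the supremum of `log |C| / log |Σ|` over all finite
alphabets `Σ` (of size at least 2) and all codes `C ⊆ Σ^X` consistent with `S`. -/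
noncomputable def sFrank {X : Type} (S : SpanoidOn X) : ℝ :=
  sSup {d : ℝ | ∃ m : ℕ, 2 ≤ m ∧ ∃ C : Set (X → Fin m),
    sConsistent S C ∧ d = Real.log (Nat.card C) / Real.log m}

/-- Feasibility for the entropy linear program of a spanoid. -/
def sEntFeasible {X : Type} (S : SpanoidOn X) (f : Set X → ℝ) : Prop :=
  f ∅ = 0 ∧ (∀ i : X, f {i} ≤ 1) ∧
  (∀ A B : Set X, f (A ∪ B) + f (A ∩ B) ≤ f A + f B) ∧
  (∀ A B : Set X, A ⊆ B → f A ≤ f B) ∧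
  (∀ A : Set X, ∀ i ∈ sSpan S A, f (A ∪ {i}) = f A)

/-- The optimum of the entropy linear program: maximize `f(X)` over feasible `f`. -/
noncomputable def sLPentropy {X : Type} (S : SpanoidOn X) : ℝ :=
  sSup {y : ℝ | ∃ f : Set X → ℝ, sEntFeasible S f ∧ y = f Set.univ}

/-- The optimum of the covering linear program: minimize `∑ i, x i` over `x ≥ 0` such that
`∑_{i ∈ B} x i ≥ 1` for every nonempty open set `B`. -/
noncomputable def sLPcover {X : Type} [Fintype X] (S : SpanoidOn X) : ℝ :=
  sInf {y : ℝ | ∃ x : X → ℝ, (∀ i, 0 ≤ x i) ∧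
    (∀ B : Set X, B.Nonempty → sOpen S B → 1 ≤ ∑ i, B.indicator x i) ∧
    y = ∑ i, x i}

/-- A spanoid on `[n]` is a `q`-LCS with error-tolerance `δ` if every `i` is spanned by at
least `δ n` pairwise disjoint `q`-element subsets. -/
def sIsLCS {n : ℕ} (q : ℕ) (δ : ℝ) (S : SpanoidOn (Fin n)) : Prop :=
  ∀ i : Fin n, ∃ M : Finset (Finset (Fin n)),
    δ * n ≤ (M.card : ℝ) ∧
    (∀ A ∈ M, A.card = q) ∧
    ((M : Set (Finset (Fin n))).Pairwise fun A B => Disjoint A B) ∧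
    ∀ A ∈ M, ((A : Set (Fin n)), i) ∈ S

/-!
Split part of the ground set into `q` disjoint copies of a finite group `G` of order
`m ≈ n / (2q)`. A shift vector `v : G^q` determines `m` pairwise disjoint transversals
`{(l, j + v l) | l}`, one for each `j : G`; every element `i` of the ground set is given the
matching of an independent random shift vector `s i`.

If a set of at most `r` elements spans everything, then stopping the derivation at size `t`
gives a `t`-set `U` in which at least `t - r` elements have a transversal inside `U`. For fixed
`U` only `m * t ^ q` of the `m ^ q` shift vectors have such a transversal, so the union bound over
`U` and over the `t - r` derived elements excludes this for some `s`, once `t` is a small multiple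
of `n ^ ((q - 2) / (q - 1))` and `r` is about `t / log₂ n`.
-/

section Span

open Finset

variable {X : Type} {S : SpanoidOn X}

/-- One-step inference: `U` derives `i` if some rule of `S` with premise inside `U` has
conclusion `i`. It is used to count the elements inferred inside `U`. -/
def sDerives (S : SpanoidOn X) (U : Set X) (i : X) : Prop :=
  ∃ A, (A, i) ∈ S ∧ A ⊆ U

/-- Every element is inferred from `m` pairwise disjoint `q`-sets, the hypothesis on the families
`M_i` in the notion of a `q`-LCS with the count `m` in place of the proportion `δ`. -/
def sHasMatchings (S : SpanoidOn X) (q m : ℕ) : Prop :=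
  ∀ i, ∃ M : Finset (Finset X), #M = m ∧ (∀ A ∈ M, #A = q) ∧
    ((M : Set (Finset X)).Pairwise fun A B => Disjoint A B) ∧ ∀ A ∈ M, ((A : Set X), i) ∈ S

lemma sDerives.mono {U V : Set X} {i : X} (h : sDerives S U i) (hUV : U ⊆ V) :
    sDerives S V i :=
  let ⟨A, hA, hAU⟩ := h
  ⟨A, hA, hAU.trans hUV⟩

lemma sHasMatchings.sIsLCS {n q m : ℕ} {S : SpanoidOn (Fin n)} {δ : ℝ}
    (hS : sHasMatchings S q m) (hδ : δ * n ≤ m) : sIsLCS q δ S :=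
  fun i => let ⟨M, hM, hrest⟩ := hS i
  ⟨M, by rwa [hM], hrest⟩

lemma subset_sSpan (S : SpanoidOn X) (T : Set X) : T ⊆ sSpan S T :=
  Set.subset_sInter fun _ hT' => hT'.1

lemma sSpan_subset {T U : Set X} (hTU : T ⊆ U) (hU : ∀ i, sDerives S U i → i ∈ U) :
    sSpan S T ⊆ U :=
  Set.sInter_subset_of_mem ⟨hTU, fun p hp hpU => hU p.2 ⟨p.1, hp, hpU⟩⟩

lemma exists_superset_card_eq_forall_sDerives {T : Finset X} {t : ℕ} (hTt : #T ≤ t)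
    (ht : t ≤ (sSpan S T).encard) :
    ∃ U : Finset X, T ⊆ U ∧ #U = t ∧ ∀ i ∈ U, i ∉ T → sDerives S U i := by
  classical
  induction t, hTt using Nat.le_induction with
  | base => exact ⟨T, subset_rfl, rfl, fun i hi hiT => absurd hi hiT⟩
  | succ t _ ih =>
    have ht_lt : (t : ℕ∞) < (sSpan S T).encard :=
      lt_of_lt_of_le (by exact_mod_cast t.lt_succ_self) ht
    obtain ⟨U, hTU, rfl, hU⟩ := ih ht_lt.le
    obtain ⟨i, hi, hiU⟩ : ∃ i, sDerives S U i ∧ i ∉ U := by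
      by_contra! hclosed
      have hspan : sSpan S T ⊆ U := sSpan_subset (mod_cast hTU) hclosed
      exact ht_lt.not_ge
        ((Set.encard_le_encard hspan).trans_eq (Set.encard_coe_eq_coe_finsetCard U))
    have hUi : (U : Set X) ⊆ (insert i U : Finset X) := mod_cast subset_insert i U
    refine ⟨insert i U, hTU.trans (subset_insert i U), card_insert_of_notMem hiU, ?_⟩
    intro x hx hxT
    rcases mem_insert.1 hx with rfl | hxU
    · exact hi.mono hUi
    · exact (hU x hxU hxT).mono hUi

variable [Fintype X]

lemma exists_card_eq_sRank (S : SpanoidOn X) :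
    ∃ T : Finset X, #T = sRank S ∧ sSpan S T = Set.univ := by
  classical
  have hspanning : {k | ∃ T : Set X, T.ncard = k ∧ sSpan S T = Set.univ}.Nonempty :=
    ⟨_, Set.univ, rfl, Set.univ_subset_iff.1 (subset_sSpan S Set.univ)⟩
  obtain ⟨T, hT, hspan⟩ := Nat.sInf_mem hspanning
  exact ⟨T.toFinset, by rw [← Set.ncard_eq_toFinset_card', hT, sRank], by simpa using hspan⟩

lemma lt_sRank_of_forall_card_derived_lt {r w : ℕ} (hX : r + w ≤ Fintype.card X)
    (h : ∀ U : Finset X, #U = r + w → ∀ W ⊆ U, (∀ i ∈ W, sDerives S U i) → #W < w) :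
    r < sRank S := by
  classical
  by_contra! hrank
  obtain ⟨T, hT, hspan⟩ := exists_card_eq_sRank S
  obtain ⟨U, hTU, hU, hderives⟩ :=
    exists_superset_card_eq_forall_sDerives (S := S) (T := T) (t := r + w) (by lia)
      (by simpa [hspan] using mod_cast hX)
  have hlt : #(U \ T) < w := h U hU (U \ T) sdiff_subset fun i hi =>
    hderives i (mem_sdiff.1 hi).1 (mem_sdiff.1 hi).2
  rw [card_sdiff_of_subset hTU] at hlt
  lia

end Span

section UnionBound

open Finset

variable {ι V : Type*} [Fintype ι] [Fintype V]

lemma card_filter_forall_mem [DecidableEq ι] [DecidableEq V] (W : Finset ι) (B : Finset V) :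
    #{s : ι → V | ∀ i ∈ W, s i ∈ B} =
      #B ^ #W * Fintype.card V ^ (Fintype.card ι - #W) := by
  have hpi : ({s : ι → V | ∀ i ∈ W, s i ∈ B} : Finset (ι → V)) =
      Fintype.piFinset fun i => if i ∈ W then B else univ := by
    ext s
    simp only [mem_filter_univ, Fintype.mem_piFinset]
    exact forall_congr' fun i => by split_ifs with hi <;> simp [hi]
  rw [hpi, Fintype.card_piFinset, ← prod_mul_prod_compl W, ← card_compl W]
  congr 1
  · exact prod_eq_pow_card fun i hi => by rw [if_pos hi]
  · exact prod_eq_pow_card fun i hi => by rw [if_neg (mem_compl.1 hi), card_univ]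

lemma exists_fun_forall_card_lt_of_union_bound [Nonempty V] {t w b : ℕ}
    (hw : w ≤ Fintype.card ι) (B : Finset ι → Finset V) (hB : ∀ U, #U = t → #(B U) ≤ b)
    (hbound : (Fintype.card ι).choose t * t.choose w * b ^ w < Fintype.card V ^ w) :
    ∃ s : ι → V, ∀ U, #U = t → ∀ W ⊆ U, (∀ i ∈ W, s i ∈ B U) → #W < w := by
  classical
  by_contra! hbad
  have hcover : (univ : Finset (ι → V)) ⊆ (powersetCard t univ).biUnion fun U =>
      (powersetCard w U).biUnion fun W => {s | ∀ i ∈ W, s i ∈ B U} := by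
    intro s _
    obtain ⟨U, hU, W, hWU, hs, hwW⟩ := hbad s
    obtain ⟨W', hW'W, hW'⟩ := exists_subset_card_eq hwW
    simp only [mem_biUnion, mem_powersetCard, mem_filter_univ]
    exact ⟨U, ⟨subset_univ U, hU⟩, W', ⟨hW'W.trans hWU, hW'⟩, fun i hi => hs i (hW'W hi)⟩
  set v := Fintype.card V
  set N := Fintype.card ι
  have hpattern : ∀ U ∈ powersetCard t univ, ∀ W ∈ powersetCard w U,
      #{s : ι → V | ∀ i ∈ W, s i ∈ B U} ≤ b ^ w * v ^ (N - w) := by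
    intro U hU W hW
    rw [card_filter_forall_mem, (mem_powersetCard.1 hW).2]
    gcongr
    exact hB U (mem_powersetCard_univ.1 hU)
  have hcard : v ^ N ≤ N.choose t * (t.choose w * (b ^ w * v ^ (N - w))) := by
    calc v ^ N = #(univ : Finset (ι → V)) := by rw [card_univ, Fintype.card_fun]
      _ ≤ _ := card_le_card hcover
      _ ≤ #(powersetCard t (univ : Finset ι)) * (t.choose w * (b ^ w * v ^ (N - w))) :=
        card_biUnion_le_card_mul _ _ _ fun U hU => by
          simpa [card_powersetCard, (mem_powersetCard.1 hU).2] using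
            card_biUnion_le_card_mul _ _ _ (hpattern U hU)
      _ = N.choose t * (t.choose w * (b ^ w * v ^ (N - w))) := by
        rw [card_powersetCard, card_univ]
  refine hcard.not_gt ?_
  calc N.choose t * (t.choose w * (b ^ w * v ^ (N - w)))
      = N.choose t * t.choose w * b ^ w * v ^ (N - w) := by ring
    _ < v ^ w * v ^ (N - w) := Nat.mul_lt_mul_of_pos_right hbound (pow_pos Fintype.card_pos _)
    _ = v ^ N := pow_mul_pow_sub v hw

end UnionBound

section ShiftBlocks

open Finset

variable {ι G X : Type*} [Fintype ι] [AddGroup G]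

/-- The transversal `{(l, j + v l) | l}` of the columns `{l} × G`, placed in `X` by `e`. For a
fixed shift vector `v` these blocks, indexed by `j`, form a matching. -/
def shiftBlock (e : ι × G ↪ X) (v : ι → G) (j : G) : Finset X :=
  univ.map ⟨fun l => e (l, j + v l), fun _ _ h => (Prod.mk.inj (e.injective h)).1⟩

variable (e : ι × G ↪ X) (v : ι → G)

lemma mem_shiftBlock {j : G} {x : X} : x ∈ shiftBlock e v j ↔ ∃ l, e (l, j + v l) = x := by
  simp only [shiftBlock, mem_map, mem_univ, true_and]
  rfl

lemma card_shiftBlock (j : G) : #(shiftBlock e v j) = Fintype.card ι :=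
  card_map _

lemma disjoint_shiftBlock {j k : G} (hjk : j ≠ k) :
    Disjoint (shiftBlock e v j) (shiftBlock e v k) := by
  simp only [disjoint_left, mem_shiftBlock]
  rintro _ ⟨l, rfl⟩ ⟨l', h⟩
  obtain ⟨rfl, hkj⟩ := Prod.mk.inj (e.injective h)
  exact hjk (add_right_cancel hkj).symm

lemma shiftBlock_injective [Nonempty ι] : Function.Injective (shiftBlock e v) := by
  intro j k hjk
  by_contra hne
  have hempty : shiftBlock e v k = ∅ := by
    simpa [hjk] using disjoint_shiftBlock e v hne
  exact Fintype.card_ne_zero ((card_shiftBlock e v k).symm.trans (card_eq_zero.2 hempty))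

variable [DecidableEq ι] [Fintype G] [DecidableEq X]

/-- The shift vectors having a block inside `U`; these are the values excluded by the union
bound. -/
def shiftsInto (e : ι × G ↪ X) (U : Finset X) : Finset (ι → G) :=
  {v | ∃ j, shiftBlock e v j ⊆ U}

lemma mem_shiftsInto {U : Finset X} : v ∈ shiftsInto e U ↔ ∃ j, shiftBlock e v j ⊆ U :=
  mem_filter_univ _

lemma card_shiftsInto_le (U : Finset X) :
    #(shiftsInto e U) ≤ Fintype.card G * #U ^ Fintype.card ι := by
  classical
  let column (j : G) (l : ι) : Finset G := {x | e (l, j + x) ∈ U}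
  have hcover : shiftsInto e U ⊆ univ.biUnion fun j => Fintype.piFinset (column j) := by
    intro v hv
    obtain ⟨j, hj⟩ := (mem_shiftsInto e v).1 hv
    simp only [mem_biUnion, mem_univ, true_and, Fintype.mem_piFinset, column, mem_filter_univ]
    exact ⟨j, fun l => hj ((mem_shiftBlock e v).2 ⟨l, rfl⟩)⟩
  have hcolumn (j : G) (l : ι) : #(column j l) ≤ #U :=
    card_le_card_of_injOn (fun x => e (l, j + x)) (fun x hx => by simpa [column] using hx)
      fun x _ y _ hxy => add_left_cancel (Prod.mk.inj (e.injective hxy)).2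
  refine (card_le_card hcover).trans (card_biUnion_le_card_mul _ _ _ fun j _ => ?_)
  rw [Fintype.card_piFinset]
  exact prod_le_pow_card _ _ _ fun l _ => hcolumn j l

end ShiftBlocks

section ShiftSpanoid

open Finset

variable {ι G X : Type} [Fintype ι] [AddGroup G]

/-- The spanoid in which each `i` is inferred from every block of the matching with shift
vector `s i`. -/
def shiftSpanoid (e : ι × G ↪ X) (s : X → ι → G) : SpanoidOn X :=
  {p | ∃ j, p.1 = shiftBlock e (s p.2) j}

variable (e : ι × G ↪ X)

lemma sDerives_shiftSpanoid {s : X → ι → G} {U : Finset X} {i : X} :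
    sDerives (shiftSpanoid e s) U i ↔ ∃ j, shiftBlock e (s i) j ⊆ U := by
  simp only [sDerives, shiftSpanoid, Set.mem_ofPred_eq]
  constructor
  · rintro ⟨_, ⟨j, rfl⟩, hj⟩
    exact ⟨j, mod_cast hj⟩
  · rintro ⟨j, hj⟩
    exact ⟨_, ⟨j, rfl⟩, mod_cast hj⟩

variable [Fintype G]

lemma sHasMatchings_shiftSpanoid [Nonempty ι] (s : X → ι → G) :
    sHasMatchings (shiftSpanoid e s) (Fintype.card ι) (Fintype.card G) := by
  intro i
  refine ⟨univ.map ⟨shiftBlock e (s i), shiftBlock_injective e (s i)⟩, card_map _, ?_, ?_, ?_⟩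
  · simp [card_shiftBlock]
  · simp only [coe_map, Function.Embedding.coeFn_mk, coe_univ, Set.image_univ]
    rintro _ ⟨j, rfl⟩ _ ⟨k, rfl⟩ hne
    exact disjoint_shiftBlock e (s i) fun hjk => hne (congrArg _ hjk)
  · simp [shiftSpanoid]

lemma exists_lt_sRank_shiftSpanoid [Fintype X] {r w : ℕ} (hX : r + w ≤ Fintype.card X)
    (hbound : (Fintype.card X).choose (r + w) * (r + w).choose w *
        (Fintype.card G * (r + w) ^ Fintype.card ι) ^ w <
      (Fintype.card G ^ Fintype.card ι) ^ w) :
    ∃ s, r < sRank (shiftSpanoid e s) := by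
  classical
  obtain ⟨s, hs⟩ := exists_fun_forall_card_lt_of_union_bound (V := ι → G)
    (le_of_add_le_right hX) (shiftsInto e)
    (fun U hU => (card_shiftsInto_le e U).trans_eq (by rw [hU])) (by rwa [Fintype.card_fun])
  refine ⟨s, lt_sRank_of_forall_card_derived_lt hX fun U hU W hWU hW => ?_⟩
  exact hs U hU W hWU fun i hi =>
    (mem_shiftsInto e _).2 ((sDerives_shiftSpanoid e).1 (hW i hi))

end ShiftSpanoid

section Estimates

lemma choose_mul_pow_self_le (n t : ℕ) : n.choose t * t ^ t ≤ (3 * n) ^ t := by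
  have hexp : (t : ℝ) ^ t / t.factorial ≤ 3 ^ t :=
    calc (t : ℝ) ^ t / t.factorial
      _ ≤ Real.exp t := Real.pow_div_factorial_le_exp _ t.cast_nonneg t
      _ = Real.exp 1 ^ t := by rw [← Real.exp_nat_mul, mul_one]
      _ ≤ 3 ^ t := by gcongr; exact Real.exp_one_lt_three.le
  have hreal : (n.choose t : ℝ) * t ^ t ≤ (3 * n) ^ t :=
    calc (n.choose t : ℝ) * t ^ t
      _ ≤ n ^ t / t.factorial * t ^ t := by gcongr; exact Nat.choose_le_pow_div t n
      _ = t ^ t / t.factorial * n ^ t := by ring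
      _ ≤ 3 ^ t * n ^ t := by gcongr
      _ = (3 * n) ^ t := (mul_pow _ _ _).symm
  exact_mod_cast hreal

lemma le_two_mul_mul_div {a n : ℕ} (ha : 0 < a) (han : a ≤ n) : n ≤ 2 * a * (n / a) := by
  have hdiv : 1 ≤ n / a := (Nat.one_le_div_iff ha).2 han
  have hlt : n < a * (n / a + 1) := Nat.lt_mul_div_succ n ha
  nlinarith

/-- The constant `12 * 2 ^ p = 3 * 2 * 2 ^ (p + 1)` collects the factors lost per element of a
`t`-set: `3` from `n.choose t ≤ (3 * n / t) ^ t`, `2` from `t.choose w ≤ 2 ^ t`, and `2 ^ (p + 1)`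
for the `r` elements of the `t`-set that are not derived. -/
lemma twelve_mul_two_pow_mul_lt_pow {p q n m t : ℕ} (hp : p ≠ 0) (hq : 0 < q) (hn : 0 < n)
    (ht : 0 < t) (hnm : n ≤ 4 * q * m) (htn : n * (128 * q * t) ^ p ≤ n ^ p) :
    12 * 2 ^ p * n * t ^ p < m ^ p := by
  have hconst : 12 * 2 ^ p < 32 ^ p :=
    calc 12 * 2 ^ p < 16 * 2 ^ p := by gcongr; norm_num
      _ ≤ 16 ^ p * 2 ^ p := by gcongr; exact Nat.le_self_pow hp 16
      _ = 32 ^ p := (mul_pow 16 2 p).symm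
  refine lt_of_mul_lt_mul_left (a := (4 * q) ^ p) ?_ (Nat.zero_le _)
  calc (4 * q) ^ p * (12 * 2 ^ p * n * t ^ p)
    _ < (4 * q) ^ p * (32 ^ p * n * t ^ p) := by gcongr
    _ = n * (4 * q * (32 * t)) ^ p := by rw [mul_pow (4 * q) (32 * t), mul_pow 32 t]; ac_rfl
    _ = n * (128 * q * t) ^ p := by ring_nf
    _ ≤ n ^ p := htn
    _ ≤ (4 * q * m) ^ p := by gcongr
    _ = (4 * q) ^ p * m ^ p := mul_pow _ _ _

lemma choose_mul_two_pow_mul_lt_pow {p n m t : ℕ} (hm : 0 < m) (ht : t ≠ 0)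
    (h : 12 * 2 ^ p * n * t ^ p < m ^ p) :
    n.choose t * 2 ^ t * (m * t ^ (p + 1)) ^ t * (2 ^ t) ^ (p + 1) < (m ^ (p + 1)) ^ t :=
  calc n.choose t * 2 ^ t * (m * t ^ (p + 1)) ^ t * (2 ^ t) ^ (p + 1)
    _ = n.choose t * t ^ t * (2 * (m * t ^ p) * 2 ^ (p + 1)) ^ t := by
      rw [pow_succ t p, ← mul_assoc m, mul_pow _ t, mul_pow _ (2 ^ (p + 1)), mul_pow 2,
        pow_right_comm]
      ring
    _ ≤ (3 * n) ^ t * (2 * (m * t ^ p) * 2 ^ (p + 1)) ^ t := by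
      gcongr
      exact choose_mul_pow_self_le n t
    _ = (12 * 2 ^ p * n * t ^ p * m) ^ t := by rw [← mul_pow]; ring
    _ < (m ^ p * m) ^ t := by gcongr
    _ = (m ^ (p + 1)) ^ t := by rw [pow_succ]

lemma mul_pow_lt_pow_of_mul_pow_add_mul_lt {a b D K r w : ℕ} (hb : 0 < b) (hD : D ^ r ≤ K)
    (h : a * b ^ (r + w) * K < D ^ (r + w)) : a * b ^ w < D ^ w := by
  refine lt_of_mul_lt_mul_right (a := K) ?_ K.zero_le
  calc a * b ^ w * K
    _ ≤ a * b ^ (r + w) * K := by gcongr; lia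
    _ < D ^ (r + w) := h
    _ = D ^ w * D ^ r := by rw [add_comm, pow_add]
    _ ≤ D ^ w * K := by gcongr

lemma choose_mul_choose_mul_pow_lt_pow {p n m r w : ℕ} (hm : 0 < m) (hrw : r + w ≠ 0)
    (hr : m ^ r ≤ 2 ^ (r + w)) (h : 12 * 2 ^ p * n * (r + w) ^ p < m ^ p) :
    n.choose (r + w) * (r + w).choose w * (m * (r + w) ^ (p + 1)) ^ w <
      (m ^ (p + 1)) ^ w := by
  have hr' : (m ^ (p + 1)) ^ r ≤ (2 ^ (r + w)) ^ (p + 1) := by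
    rw [pow_right_comm]
    gcongr
  calc n.choose (r + w) * (r + w).choose w * (m * (r + w) ^ (p + 1)) ^ w
    _ ≤ n.choose (r + w) * 2 ^ (r + w) * (m * (r + w) ^ (p + 1)) ^ w := by
      gcongr
      exact Nat.choose_le_two_pow _ _
    _ < (m ^ (p + 1)) ^ w :=
      mul_pow_lt_pow_of_mul_pow_add_mul_lt (by positivity) hr'
        (choose_mul_two_pow_mul_lt_pow hm hrw h)

end Estimates

section Parameters

open Filter

lemma pow_floor_div_logb_le {b x : ℝ} (hb : 1 < b) (hx : 1 < x) (t : ℕ) :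
    x ^ ⌊t / Real.logb b x⌋₊ ≤ b ^ t := by
  have hlog : 0 < Real.logb b x := Real.logb_pos hb hx
  rw [← Real.rpow_natCast b, ← Real.logb_le_iff_le_rpow hb (by positivity), Real.logb_pow,
    ← le_div_iff₀ hlog]
  exact Nat.floor_le (by positivity)

lemma mul_pow_floor_rpow_div_le {p : ℕ} (hp : p ≠ 0) {a x : ℝ} (ha : 0 < a) (hx : 0 < x) :
    x * (a * ⌊x ^ (((p : ℝ) - 1) / p) / a⌋₊) ^ p ≤ x ^ p := by
  have hfloor : a * ⌊x ^ (((p : ℝ) - 1) / p) / a⌋₊ ≤ x ^ (((p : ℝ) - 1) / p) := by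
    rw [mul_comm, ← le_div_iff₀ ha]
    exact Nat.floor_le (by positivity)
  calc x * (a * ⌊x ^ (((p : ℝ) - 1) / p) / a⌋₊) ^ p
    _ ≤ x * (x ^ (((p : ℝ) - 1) / p)) ^ p := by gcongr
    _ = x * x ^ ((p : ℝ) - 1) := by
      rw [← Real.rpow_mul_natCast hx.le, div_mul_cancel₀ _ (by exact_mod_cast hp)]
    _ = x ^ p := by
      rw [Real.rpow_sub_one hx.ne', Real.rpow_natCast, mul_div_cancel₀ _ hx.ne']

lemma eventually_exists_pow_le_and_rpow_div_logb_lt {p a : ℕ} (hp : 2 ≤ p) (ha : 0 < a) :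
    ∀ᶠ n : ℕ in atTop, ∃ r t : ℕ, 0 < t ∧ t ≤ n ∧ r ≤ t ∧ n ^ r ≤ 2 ^ t ∧
      n * (a * t) ^ p ≤ n ^ p ∧
      1 / (2 * (a : ℝ)) * (n : ℝ) ^ (((p : ℝ) - 1) / p) / Real.logb 2 n < r + 1 := by
  have hp' : (2 : ℝ) ≤ p := by exact_mod_cast hp
  have hlarge : ∀ᶠ n : ℕ in atTop, (a : ℝ) ≤ (n : ℝ) ^ (((p : ℝ) - 1) / p) :=
    ((tendsto_rpow_atTop (div_pos (by linarith) (by linarith))).comp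
      tendsto_natCast_atTop_atTop).eventually_ge_atTop _
  filter_upwards [hlarge, eventually_ge_atTop 2] with n hn hn2
  have hn2' : (2 : ℝ) ≤ n := by exact_mod_cast hn2
  have hlog : 1 ≤ Real.logb 2 n := by
    rw [Real.le_logb_iff_rpow_le one_lt_two (by linarith)]
    simpa using hn2'
  set y : ℝ := (n : ℝ) ^ (((p : ℝ) - 1) / p)
  have hya : 1 ≤ y / a := (one_le_div (by positivity)).2 hn
  set t : ℕ := ⌊y / a⌋₊
  set r : ℕ := ⌊t / Real.logb 2 n⌋₊
  have htp : n * (a * t) ^ p ≤ n ^ p := by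
    have hreal := mul_pow_floor_rpow_div_le (a := a) (x := n) (by lia : p ≠ 0)
      (by positivity) (by positivity)
    change (n : ℝ) * (a * t) ^ p ≤ n ^ p at hreal
    exact_mod_cast hreal
  have htn : t ≤ n := by
    refine (Nat.pow_le_pow_iff_left (by lia : p ≠ 0)).1 ?_
    calc t ^ p ≤ (a * t) ^ p := by gcongr; exact Nat.le_mul_of_pos_left t ha
      _ ≤ n * (a * t) ^ p := Nat.le_mul_of_pos_left _ (by lia)
      _ ≤ n ^ p := htp
  refine ⟨r, t, Nat.floor_pos.2 hya, htn, ?_, ?_, htp, ?_⟩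
  · exact Nat.floor_le_of_le (div_le_self t.cast_nonneg hlog)
  · exact_mod_cast pow_floor_div_logb_le one_lt_two (by linarith : (1 : ℝ) < n) t
  · calc 1 / (2 * (a : ℝ)) * y / Real.logb 2 n
      _ = y / a / 2 / Real.logb 2 n := by ring
      _ ≤ t / Real.logb 2 n := by gcongr; exact (Nat.div_two_lt_floor hya).le
      _ < r + 1 := Nat.lt_floor_add_one _

lemma exists_sHasMatchings_lt_sRank {p n r t : ℕ} (hp : p ≠ 0) (hn : 2 * (p + 1) ≤ n)
    (ht : 0 < t) (htn : t ≤ n) (hrt : r ≤ t) (hnr : n ^ r ≤ 2 ^ t)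
    (htp : n * (128 * (p + 1) * t) ^ p ≤ n ^ p) :
    ∃ S : SpanoidOn (Fin n), sHasMatchings S (p + 1) (n / (2 * (p + 1))) ∧ r < sRank S := by
  obtain ⟨w, rfl⟩ := Nat.exists_eq_add_of_le hrt
  set m := n / (2 * (p + 1))
  have hm : 0 < m := Nat.div_pos hn (by lia)
  have : NeZero m := ⟨hm.ne'⟩
  have hmul : 2 * (p + 1) * m ≤ n := Nat.mul_div_le n (2 * (p + 1))
  have hnm : n ≤ 2 * (2 * (p + 1)) * m := le_two_mul_mul_div (by lia) hn
  obtain ⟨e⟩ : Nonempty (Fin (p + 1) × ZMod m ↪ Fin n) :=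
    Function.Embedding.nonempty_of_card_le (by
      rw [Fintype.card_prod, Fintype.card_fin, Fintype.card_fin, ZMod.card]
      nlinarith)
  have hbound := choose_mul_choose_mul_pow_lt_pow hm ht.ne'
    ((Nat.pow_le_pow_left (Nat.div_le_self _ _) r).trans hnr)
    (twelve_mul_two_pow_mul_lt_pow hp p.succ_pos (by lia) ht (by linarith) htp)
  obtain ⟨s, hs⟩ := exists_lt_sRank_shiftSpanoid e (r := r) (w := w)
    (by simpa using htn) (by simpa [ZMod.card] using hbound)
  exact ⟨shiftSpanoid e s, by simpa [ZMod.card] using sHasMatchings_shiftSpanoid e s, hs⟩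

end Parameters

/-- For every `q ≥ 3` there exist `c > 0` and `n₀` such that for all `n ≥ n₀`
there is a spanoid on `[n]` in which every element is spanned by `⌊n/(2q)⌋` pairwise disjoint
`q`-subsets (hence a `q`-LCS with error-tolerance `1/(4q)`) and whose rank exceeds
`c · n^{(q-2)/(q-1)} / log₂ n`. -/
theorem exists_q_LCS_high_rank :
    ∀ q : ℕ, 3 ≤ q → ∃ c : ℝ, 0 < c ∧ ∃ n₀ : ℕ, ∀ n : ℕ, n₀ ≤ n →
      ∃ S : SpanoidOn (Fin n),
        (∀ i : Fin n, ∃ M : Finset (Finset (Fin n)),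
          M.card = n / (2 * q) ∧
          (∀ A ∈ M, A.card = q) ∧
          ((M : Set (Finset (Fin n))).Pairwise fun A B => Disjoint A B) ∧
          ∀ A ∈ M, ((A : Set (Fin n)), i) ∈ S) ∧
        sIsLCS q (1 / (4 * (q : ℝ))) S ∧
        c * (n : ℝ) ^ (((q : ℝ) - 2) / ((q : ℝ) - 1)) / Real.logb 2 n < (sRank S : ℝ) := by
  intro q hq
  obtain ⟨p, rfl⟩ : ∃ p, q = p + 1 := ⟨q - 1, by lia⟩
  obtain ⟨n₁, hn₁⟩ := Filter.eventually_atTop.1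
    (eventually_exists_pow_le_and_rpow_div_logb_lt (p := p) (a := 128 * (p + 1)) (by lia) (by lia))
  refine ⟨1 / (2 * (128 * (p + 1) : ℕ)), by positivity, max n₁ (2 * (p + 1)), fun n hn => ?_⟩
  obtain ⟨r, t, ht, htn, hrt, hnr, htp, hlt⟩ := hn₁ n (le_of_max_le_left hn)
  have hqn : 2 * (p + 1) ≤ n := le_of_max_le_right hn
  obtain ⟨S, hS, hrank⟩ := exists_sHasMatchings_lt_sRank (by lia) hqn ht htn hrt hnr htp
  refine ⟨S, hS, hS.sIsLCS ?_, ?_⟩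
  · have hdiv : n ≤ 2 * (2 * (p + 1)) * (n / (2 * (p + 1))) := le_two_mul_mul_div (by lia) hqn
    rw [one_div_mul_eq_div, div_le_iff₀' (by positivity)]
    exact_mod_cast hdiv.trans_eq (by ring)
  · have hexponent : (((p + 1 : ℕ) : ℝ) - 2) / (((p + 1 : ℕ) : ℝ) - 1) = ((p : ℝ) - 1) / p := by
      push_cast
      congr 1 <;> ring
    rw [hexponent]
    exact hlt.trans_le (by exact_mod_cast hrank)
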